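/- Let R be a commutative ring, let d ≥ 1 and let t_1, …, t_d ∈ R. Fix N with 1 ≤ N ≤ d, and suppose that the elementary symmetric polynomial values σ_k(t_1, …, t_d) vanish for every k with N ≤ k ≤ d. Then for every partition ω of d whose number of parts is at least N, the monomial symmetric polynomial m_ω evaluated at (t_1, …, t_d) is zero. -/

import Mathlib

/-!
Setting all but `l(ω) - 1` of the variables to `0` kills `m_ω`, since each of its monomials involves
`l(ω)` distinct variables, while it sends `σ_k` to the `k`-th elementary symmetric polynomial in
the remaining variables. The latter are algebraically independent for `1 ≤ k < l(ω)` and vanish for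
`k ≥ l(ω)`. Hence, if `m_ω` is written as a polynomial `q` in the `σ_k`, every term of `q` involves
some `σ_k` with `k ≥ l(ω)`, all of which vanish at `t`.
-/

section

open MvPolynomial

variable {σ τ R A : Type*}

section KillCompl

variable [CommSemiring R] {f : σ → τ} (hf : Function.Injective f)

theorem killCompl_X_apply (i : σ) : killCompl hf (X (f i) : MvPolynomial τ R) = X i := by
  rw [← rename_X, killCompl_rename_app]

theorem killCompl_X_of_notMem_range {j : τ} (hj : j ∉ Set.range f) :
    killCompl hf (X j : MvPolynomial τ R) = 0 := by
  rw [killCompl, aeval_X, dif_neg hj]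

theorem killCompl_eq_zero_of_X_dvd {j : τ} (hj : j ∉ Set.range f) {p : MvPolynomial τ R}
    (hp : X j ∣ p) : killCompl hf p = 0 := by
  simpa only [killCompl_X_of_notMem_range hf hj, zero_dvd_iff] using map_dvd (killCompl hf) hp

theorem aeval_comp_killCompl [CommSemiring A] [Algebra R A] {x : τ → A}
    (hx : ∀ j ∉ Set.range f, x j = 0) (p : MvPolynomial τ R) :
    aeval (x ∘ f) (killCompl hf p) = aeval x p := by
  suffices h : (aeval (x ∘ f)).comp (killCompl hf) = (aeval x : MvPolynomial τ R →ₐ[R] A) from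
    DFunLike.congr_fun h p
  ext j
  rw [AlgHom.comp_apply, aeval_X]
  by_cases hj : j ∈ Set.range f
  · obtain ⟨i, rfl⟩ := hj
    rw [killCompl_X_apply, aeval_X, Function.comp_apply]
  · rw [killCompl_X_of_notMem_range hf hj, map_zero, hx j hj]

theorem killCompl_esymm [Fintype σ] [Fintype τ] (k : ℕ) :
    killCompl hf (esymm τ R k) = esymm σ R k := by
  let e : σ ↪ τ := ⟨f, hf⟩
  have range_subset : (Finset.univ.map e).powersetCard k ⊆ Finset.univ.powersetCard k :=
    Finset.powersetCard_mono (Finset.subset_univ _)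
  have killed (s : Finset τ) (hs : s ∈ Finset.univ.powersetCard k)
      (hs_range : s ∉ (Finset.univ.map e).powersetCard k) :
      killCompl hf (∏ j ∈ s, X j : MvPolynomial τ R) = 0 := by
    have not_subset : ¬ s ⊆ Finset.univ.map e := fun h ↦
      hs_range (Finset.mem_powersetCard.2 ⟨h, (Finset.mem_powersetCard.1 hs).2⟩)
    obtain ⟨j, hjs, hj⟩ := Finset.not_subset.1 not_subset
    exact killCompl_eq_zero_of_X_dvd hf (by simpa [e] using hj) (Finset.dvd_prod_of_mem X hjs)
  rw [esymm, map_sum, ← Finset.sum_subset range_subset killed, Finset.powersetCard_map,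
    Finset.sum_map, esymm]
  refine Finset.sum_congr rfl fun s _ ↦ ?_
  rw [RelEmbedding.coe_toEmbedding, Finset.mapEmbedding_apply, Finset.prod_map, map_prod]
  exact Finset.prod_congr rfl fun i _ ↦ killCompl_X_apply hf i

end KillCompl

theorem esymm_eq_zero_of_card_lt [CommSemiring R] [Fintype σ] {k : ℕ} (hk : Fintype.card σ < k) :
    esymm σ R k = 0 := by
  rw [esymm, Finset.powersetCard_eq_empty.2 hk, Finset.sum_empty]

theorem killCompl_aeval_esymm [CommSemiring R] [Fintype σ] [Fintype τ] {f : σ → τ}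
    (hf : Function.Injective f) (q : MvPolynomial (Fin (Fintype.card τ)) R) :
    killCompl hf (aeval (fun j : Fin (Fintype.card τ) ↦ esymm τ R (j + 1)) q) =
      aeval (fun i : Fin (Fintype.card σ) ↦ esymm σ R (i + 1))
        (killCompl (Fin.castLE_injective (Fintype.card_le_of_injective f hf)) q) := by
  have card_le := Fintype.card_le_of_injective f hf
  have esymm_vanish (j : Fin (Fintype.card τ)) (hj : j ∉ Set.range (Fin.castLE card_le)) :
      esymm σ R (j + 1) = 0 :=
    esymm_eq_zero_of_card_lt (Nat.lt_succ_of_le (by simpa using hj))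
  rw [comp_aeval_apply]
  simp only [killCompl_esymm]
  exact (aeval_comp_killCompl (Fin.castLE_injective card_le) esymm_vanish q).symm

theorem card_parts_ofSym [DecidableEq τ] {n : ℕ} (s : Sym τ n) :
    Multiset.card (Nat.Partition.ofSym s).parts = (s : Multiset τ).toFinset.card :=
  Multiset.card_map _ _

theorem killCompl_msymm_eq_zero [CommSemiring R] [Fintype σ] [Fintype τ] [DecidableEq τ]
    {f : σ → τ} (hf : Function.Injective f) {n : ℕ} (ω : n.Partition)
    (hω : Fintype.card σ < Multiset.card ω.parts) :
    killCompl hf (msymm τ R ω) = 0 := by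
  rw [msymm, map_sum]
  refine Finset.sum_eq_zero ?_
  rintro ⟨s, rfl⟩ -
  have card_image_lt : (Finset.univ.image f).card < (s : Multiset τ).toFinset.card :=
    Finset.card_image_le.trans_lt (card_parts_ofSym s ▸ hω)
  obtain ⟨j, hjs, hj⟩ := Finset.exists_mem_notMem_of_card_lt_card card_image_lt
  exact killCompl_eq_zero_of_X_dvd hf (by simpa using hj)
    (Multiset.dvd_prod (Multiset.mem_map_of_mem X (Multiset.mem_toFinset.1 hjs)))

section FundamentalTheorem

variable [CommRing R] [Fintype σ] [Fintype τ]

theorem exists_aeval_esymm_eq {p : MvPolynomial τ R} (hp : p.IsSymmetric) :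
    ∃ q : MvPolynomial (Fin (Fintype.card τ)) R,
      aeval (fun i : Fin (Fintype.card τ) ↦ esymm τ R (i + 1)) q = p := by
  obtain ⟨q, hq⟩ := esymmAlgHom_surjective R le_rfl ⟨p, hp⟩
  exact ⟨q, by rw [← esymmAlgHom_apply, hq]⟩

theorem aeval_esymm_injective : Function.Injective
    (aeval (R := R) fun i : Fin (Fintype.card σ) ↦ esymm σ R (i + 1)) := fun p q hpq ↦
  esymmAlgHom_injective R le_rfl (Subtype.ext (by simpa only [esymmAlgHom_apply] using hpq))

theorem aeval_eq_zero_of_killCompl_eq_zero [CommSemiring A] [Algebra R A]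
    {f : σ → τ} (hf : Function.Injective f) {t : τ → A}
    (ht : ∀ k, Fintype.card σ < k → k ≤ Fintype.card τ → aeval t (esymm τ R k) = 0)
    {p : MvPolynomial τ R} (hp : p.IsSymmetric) (hp_kill : killCompl hf p = 0) :
    aeval t p = 0 := by
  obtain ⟨q, rfl⟩ := exists_aeval_esymm_eq hp
  have card_le := Fintype.card_le_of_injective f hf
  have killCompl_q : killCompl (Fin.castLE_injective card_le) q = 0 := by
    apply aeval_esymm_injective
    rw [← killCompl_aeval_esymm hf, hp_kill, map_zero]
  have esymm_vanish (j : Fin (Fintype.card τ)) (hj : j ∉ Set.range (Fin.castLE card_le)) :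
      aeval t (esymm τ R (j + 1)) = 0 :=
    ht _ (Nat.lt_succ_of_le (by simpa using hj)) j.2
  rw [comp_aeval_apply, ← aeval_comp_killCompl (Fin.castLE_injective card_le) esymm_vanish,
    killCompl_q, map_zero]

end FundamentalTheorem

theorem msymm_eval_eq_zero_of_esymm_eval_eq_zero_general [CommRing R] [CommSemiring A]
    [Algebra R A] [Fintype τ] [DecidableEq τ] (t : τ → A) {n : ℕ} (ω : n.Partition)
    (ht : ∀ k, Multiset.card ω.parts ≤ k → k ≤ Fintype.card τ → aeval t (esymm τ R k) = 0) :
    aeval t (msymm τ R ω) = 0 := by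
  obtain hω | hω := (Multiset.card ω.parts).eq_zero_or_pos
  · have one_eq_zero : (1 : A) = 0 := by simpa using ht 0 hω.le (Nat.zero_le _)
    exact eq_zero_of_zero_eq_one one_eq_zero.symm _
  · let m := min (Multiset.card ω.parts - 1) (Fintype.card τ)
    obtain ⟨f⟩ : Nonempty (Fin m ↪ τ) :=
      Function.Embedding.nonempty_of_card_le (by simp [m])
    refine aeval_eq_zero_of_killCompl_eq_zero f.injective (fun k hmk hk ↦ ht k ?_ hk)
      (msymm_isSymmetric τ R ω) (killCompl_msymm_eq_zero f.injective ω ?_)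
    · rw [Fintype.card_fin] at hmk
      omega
    · rw [Fintype.card_fin]
      omega

end

/-- Let `R` be a commutative ring, `d ≥ 1`, and `t : Fin d → R`.
Fix `N` with `1 ≤ N ≤ d` and suppose the elementary symmetric polynomials
`σ_k(t_1, …, t_d)` vanish for all `N ≤ k ≤ d`.  Then for every partition `ω` of `d`
with at least `N` parts, the monomial symmetric polynomial `m_ω` evaluated at
`(t_1, …, t_d)` is zero. -/
theorem msymm_eval_eq_zero_of_esymm_eval_eq_zero
    {R : Type*} [CommRing R] (d : ℕ) (hd : 1 ≤ d) (t : Fin d → R)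
    (N : ℕ) (hN1 : 1 ≤ N) (hNd : N ≤ d)
    (hσ : ∀ k, N ≤ k → k ≤ d → MvPolynomial.eval t (MvPolynomial.esymm (Fin d) R k) = 0)
    (ω : Nat.Partition d) (hω : N ≤ Multiset.card ω.parts) :
    MvPolynomial.eval t (MvPolynomial.msymm (Fin d) R ω) = 0 := by
  rw [← MvPolynomial.aeval_eq_eval]
  exact msymm_eval_eq_zero_of_esymm_eval_eq_zero_general t ω fun k hk hkd ↦
    hσ k (hω.trans hk) (hkd.trans_eq (Fintype.card_fin d))
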